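/- arXiv:2208.09568 — 2 statements merged into one kernel-verified Lean document; each statement's English description precedes it below -/
import Mathlib

section
/- Let k ≥ 1, let j : Fin k → Fin m be injective, i : Fin k → Fin n, and let q : Fin n; write J for the event ⋂_{t : Fin k} {Yp (j t) = i t}. Suppose real numbers are given such that for each t : Fin k, L t ≤ P(⋂_{s ≠ t} {Yp (j s) = i s}) ≤ U t and G t ≤ P(Yp (j t) = i t ∧ Y = q) ≤ H t; for each r : Fin k with i r = q, A r ≤ P((⋂_{s ≠ r} {Yp (j s) = i s}) ∧ X = j r ∧ Y = q) ≤ B r; and for each p : Fin m outside the range of j, C p ≤ P(J ∧ X = p ∧ Y = q) ≤ D p. Then max{ 0, (Σ_t P(Yp (j t) = i t)) + P(Y = q) − k, max_t (L t + G t − 1), Σ_{r : i r = q} A r + Σ_{p ∉ range j} C p } ≤ P(J ∧ Y = q) ≤ min{ min_t P(Yp (j t) = i t), P(Y = q), min_t U t, min_t H t, Σ_{r : i r = q} B r + Σ_{p ∉ range j} D p }. (This is Theorem 7 of the paper, bounding P(y_{i_1}_{x_{j_1}}, …, y_{i_k}_{x_{j_k}}, y_q).) -/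
open MeasureTheory

/-- Real-valued probability of an event. -/
noncomputable def pr {Ω : Type*} [MeasurableSpace Ω] (P : Measure Ω) (A : Set Ω) : ℝ :=
  (P A).toReal

/-!
Splitting `J ∩ {Y = q}` along the observed treatment gives an exact formula for its probability.
On `{X = j r}` consistency reads `Y = Yp (j r)`, so the piece is empty when `i r ≠ q`, and when
`i r = q` the constraint on `Yp (j r)` is absorbed by `Y = q`. The remaining bounds are monotonicity
and Fréchet's inequality for intersections.
-/

lemma sum_eq_sum_comp_add_sum_forall_ne {ι α M : Type*} [Fintype ι] [Fintype α] [AddCommMonoid M]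
    {j : ι → α} (hj : Function.Injective j) [DecidablePred fun a ↦ ∀ t, j t ≠ a] (f : α → M) :
    ∑ a, f a = ∑ t, f (j t) + ∑ a with ∀ t, j t ≠ a, f a := by
  classical
  rw [← Finset.sum_add_sum_compl (Finset.univ.map ⟨j, hj⟩), Finset.sum_map]
  congr 2
  ext a
  simp

section Probability

variable {Ω ι : Type*} [MeasurableSpace Ω] {P : Measure Ω}

lemma measureReal_eq_sum_inter_preimage_singleton {α : Type*} [Fintype α] [MeasurableSpace α]
    [MeasurableSingletonClass α] [IsFiniteMeasure P] {X : Ω → α} (hX : Measurable X) (s : Set Ω) :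
    P.real s = ∑ a, P.real (s ∩ X ⁻¹' {a}) := by
  have hfiber (a : α) : MeasurableSet (X ⁻¹' {a}) := hX (measurableSet_singleton a)
  calc P.real s = (P.restrict s).real (X ⁻¹' ↑(Finset.univ : Finset α)) := by simp
    _ = ∑ a, (P.restrict s).real (X ⁻¹' {a}) :=
      (sum_measureReal_preimage_singleton Finset.univ fun a _ ↦ hfiber a).symm
    _ = ∑ a, P.real (s ∩ X ⁻¹' {a}) := by
      simp only [measureReal_restrict_apply (hfiber _), Set.inter_comm s]

variable [IsProbabilityMeasure P]

lemma measureReal_add_sub_one_le_inter {s t : Set Ω} (ht : MeasurableSet t) :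
    P.real s + P.real t - 1 ≤ P.real (s ∩ t) := by
  linarith [measureReal_union_add_inter (μ := P) (s := s) ht,
    measureReal_le_one (μ := P) (s := s ∪ t)]

lemma one_sub_sum_one_sub_le_measureReal_iInter [Fintype ι] {S : ι → Set Ω}
    (hS : ∀ t, MeasurableSet (S t)) :
    1 - ∑ t, (1 - P.real (S t)) ≤ P.real (⋂ t, S t) := by
  have union_bound : P.real (⋂ t, S t)ᶜ ≤ ∑ t, (1 - P.real (S t)) := by
    simpa only [Set.compl_iInter, probReal_compl_eq_one_sub (hS _)] using
      measureReal_iUnion_fintype_le (μ := P) fun t ↦ (S t)ᶜ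
  linarith [probReal_compl_eq_one_sub (μ := P) (MeasurableSet.iInter hS)]

lemma sum_measureReal_add_sub_card_le_forall_and [Fintype ι] {p : ι → Ω → Prop} {r : Ω → Prop}
    (hp : ∀ t, MeasurableSet {ω | p t ω}) (hr : MeasurableSet {ω | r ω}) :
    ∑ t, P.real {ω | p t ω} + P.real {ω | r ω} - Fintype.card ι ≤
      P.real {ω | (∀ t, p t ω) ∧ r ω} := by
  rw [Set.ofPred_and, Set.ofPred_forall]
  have hforall := one_sub_sum_one_sub_le_measureReal_iInter (P := P) hp
  have hand := measureReal_add_sub_one_le_inter (P := P) (s := ⋂ t, {ω | p t ω}) hr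
  simp only [Finset.sum_sub_distrib, Finset.sum_const, Finset.card_univ, nsmul_one] at hforall
  linarith

lemma measureReal_forall_ne_add_sub_one_le_forall_and {p : ι → Ω → Prop} {r : Ω → Prop} {t : ι}
    (h : MeasurableSet {ω | p t ω ∧ r ω}) :
    P.real {ω | ∀ s, s ≠ t → p s ω} + P.real {ω | p t ω ∧ r ω} - 1 ≤
      P.real {ω | (∀ s, p s ω) ∧ r ω} := by
  refine (measureReal_add_sub_one_le_inter h).trans (measureReal_mono ?_)
  rintro ω ⟨hne, ht, hr⟩
  exact ⟨(and_forall_ne t).1 ⟨ht, hne⟩, hr⟩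

end Probability

section PotentialOutcomes

variable {Ω α β ι : Type*} {X : Ω → α} {Y : Ω → β} {Yp : α → Ω → β}

lemma joint_treated_eq_empty_of_ne (hconsist : ∀ ω, Y ω = Yp (X ω) ω) {j : ι → α} {i : ι → β}
    {q : β} {r : ι} (hr : i r ≠ q) :
    {ω | (∀ t, Yp (j t) ω = i t) ∧ X ω = j r ∧ Y ω = q} = ∅ := by
  refine Set.eq_empty_of_forall_notMem fun ω ⟨hJ, hX, hY⟩ ↦ hr ?_
  rw [← hJ r, ← hX, ← hconsist, hY]

lemma joint_treated_eq_forall_ne_of_eq (hconsist : ∀ ω, Y ω = Yp (X ω) ω) {j : ι → α}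
    {i : ι → β} {q : β} {r : ι} (hr : i r = q) :
    {ω | (∀ t, Yp (j t) ω = i t) ∧ X ω = j r ∧ Y ω = q} =
      {ω | (∀ s, s ≠ r → Yp (j s) ω = i s) ∧ X ω = j r ∧ Y ω = q} := by
  ext ω
  refine and_congr_left fun ⟨hX, hY⟩ ↦ ?_
  have hjr : Yp (j r) ω = i r := by rw [← hX, ← hconsist, hY, hr]
  rw [← and_forall_ne r, and_iff_right hjr]

lemma measureReal_joint_eq_sum_add_sum [MeasurableSpace Ω] {P : Measure Ω} [IsFiniteMeasure P]
    [Fintype α] [MeasurableSpace α] [MeasurableSingletonClass α] [DecidableEq β] [Fintype ι]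
    (hX : Measurable X) (hconsist : ∀ ω, Y ω = Yp (X ω) ω)
    {j : ι → α} (hj : Function.Injective j) [DecidablePred fun a ↦ ∀ t, j t ≠ a]
    (i : ι → β) (q : β) :
    P.real {ω | (∀ t, Yp (j t) ω = i t) ∧ Y ω = q} =
      ∑ r with i r = q, P.real {ω | (∀ s, s ≠ r → Yp (j s) ω = i s) ∧ X ω = j r ∧ Y ω = q} +
      ∑ p with ∀ t, j t ≠ p, P.real {ω | (∀ t, Yp (j t) ω = i t) ∧ X ω = p ∧ Y ω = q} := by
  have hpiece (p : α) : {ω | (∀ t, Yp (j t) ω = i t) ∧ Y ω = q} ∩ X ⁻¹' {p} =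
      {ω | (∀ t, Yp (j t) ω = i t) ∧ X ω = p ∧ Y ω = q} := by
    ext ω
    exact and_assoc.trans (and_congr_right' and_comm)
  have hrange : ∑ r, P.real {ω | (∀ t, Yp (j t) ω = i t) ∧ X ω = j r ∧ Y ω = q} =
      ∑ r with i r = q,
        P.real {ω | (∀ s, s ≠ r → Yp (j s) ω = i s) ∧ X ω = j r ∧ Y ω = q} := by
    rw [Finset.sum_filter]
    refine Finset.sum_congr rfl fun r _ ↦ ?_
    split_ifs with hr
    · rw [joint_treated_eq_forall_ne_of_eq hconsist hr]
    · rw [joint_treated_eq_empty_of_ne hconsist hr, measureReal_empty]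
  rw [measureReal_eq_sum_inter_preimage_singleton hX, sum_eq_sum_comp_add_sum_forall_ne hj]
  simp only [hpiece, hrange]

end PotentialOutcomes

theorem bounds_multi_yq_general {Ω α β ι : Type*} [MeasurableSpace Ω] {P : Measure Ω}
    [IsProbabilityMeasure P] [Fintype α] [MeasurableSpace α] [MeasurableSingletonClass α]
    [DecidableEq β] [MeasurableSpace β] [MeasurableSingletonClass β] [Fintype ι] [Nonempty ι]
    {X : Ω → α} {Y : Ω → β} {Yp : α → Ω → β}
    (hX : Measurable X) (hY : Measurable Y) (hYp : ∀ a, Measurable (Yp a))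
    (hconsist : ∀ ω, Y ω = Yp (X ω) ω)
    {j : ι → α} (hj : Function.Injective j) [DecidablePred fun a ↦ ∀ t, j t ≠ a]
    {i : ι → β} {q : β} {L U G H A B : ι → ℝ} {C D : α → ℝ}
    (hL : ∀ t, L t ≤ P.real {ω | ∀ s, s ≠ t → Yp (j s) ω = i s})
    (hU : ∀ t, P.real {ω | ∀ s, s ≠ t → Yp (j s) ω = i s} ≤ U t)
    (hG : ∀ t, G t ≤ P.real {ω | Yp (j t) ω = i t ∧ Y ω = q})
    (hH : ∀ t, P.real {ω | Yp (j t) ω = i t ∧ Y ω = q} ≤ H t)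
    (hA : ∀ r, i r = q →
      A r ≤ P.real {ω | (∀ s, s ≠ r → Yp (j s) ω = i s) ∧ X ω = j r ∧ Y ω = q})
    (hB : ∀ r, i r = q →
      P.real {ω | (∀ s, s ≠ r → Yp (j s) ω = i s) ∧ X ω = j r ∧ Y ω = q} ≤ B r)
    (hC : ∀ p, p ∉ Set.range j →
      C p ≤ P.real {ω | (∀ t, Yp (j t) ω = i t) ∧ X ω = p ∧ Y ω = q})
    (hD : ∀ p, p ∉ Set.range j →
      P.real {ω | (∀ t, Yp (j t) ω = i t) ∧ X ω = p ∧ Y ω = q} ≤ D p) :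
    max (max 0 (∑ t, P.real {ω | Yp (j t) ω = i t} + P.real {ω | Y ω = q} - Fintype.card ι))
        (max (⨆ t, (L t + G t - 1)) (∑ r with i r = q, A r + ∑ p with ∀ t, j t ≠ p, C p))
      ≤ P.real {ω | (∀ t, Yp (j t) ω = i t) ∧ Y ω = q} ∧
    P.real {ω | (∀ t, Yp (j t) ω = i t) ∧ Y ω = q}
      ≤ min (min (⨅ t, P.real {ω | Yp (j t) ω = i t}) (P.real {ω | Y ω = q}))
          (min (min (⨅ t, U t) (⨅ t, H t))
            (∑ r with i r = q, B r + ∑ p with ∀ t, j t ≠ p, D p)) := by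
  have hpot (t : ι) : MeasurableSet {ω | Yp (j t) ω = i t} :=
    hYp (j t) (measurableSet_singleton (i t))
  have hobs : MeasurableSet {ω | Y ω = q} := hY (measurableSet_singleton q)
  have hsplit := measureReal_joint_eq_sum_add_sum (P := P) hX hconsist hj i q
  simp only [Set.mem_range, not_exists] at hC hD
  refine ⟨max_le (max_le measureReal_nonneg ?_) (max_le (ciSup_le fun t ↦ ?_) ?_),
    le_min (le_min (le_ciInf fun t ↦ ?_) ?_)
      (le_min (le_min (le_ciInf fun t ↦ ?_) (le_ciInf fun t ↦ ?_)) ?_)⟩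
  · exact sum_measureReal_add_sub_card_le_forall_and hpot hobs
  · linarith [hL t, hG t, measureReal_forall_ne_add_sub_one_le_forall_and (P := P)
      (p := fun s ω ↦ Yp (j s) ω = i s) (r := fun ω ↦ Y ω = q) ((hpot t).inter hobs)]
  · rw [hsplit]
    gcongr with r hr p hp
    exacts [hA r (by simpa using hr), hC p (by simpa using hp)]
  · exact measureReal_mono fun ω h ↦ h.1 t
  · exact measureReal_mono fun ω h ↦ h.2
  · exact (hU t).trans' (measureReal_mono fun ω h s _ ↦ h.1 s)
  · exact (hH t).trans' (measureReal_mono fun ω h ↦ ⟨h.1 t, h.2⟩)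
  · rw [hsplit]
    gcongr with r hr p hp
    exacts [hB r (by simpa using hr), hD p (by simpa using hp)]

/-- Theorem 7: bounds for `P(y_{i_1}_{x_{j_1}}, …, y_{i_k}_{x_{j_k}}, y_q)`. -/
theorem bounds_multi_yq
    {Ω : Type*} [MeasurableSpace Ω] (P : Measure Ω) [IsProbabilityMeasure P]
    {m n : ℕ} (hm : 0 < m) (hn : 0 < n)
    (X : Ω → Fin m) (Y : Ω → Fin n) (Yp : Fin m → Ω → Fin n)
    (hX : Measurable X) (hY : Measurable Y) (hYp : ∀ j, Measurable (Yp j))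
    (hconsist : ∀ ω, Y ω = Yp (X ω) ω)
    {k : ℕ} (hk : 1 ≤ k) (j : Fin k → Fin m) (hj : Function.Injective j)
    (i : Fin k → Fin n) (q : Fin n)
    (L U G H A B : Fin k → ℝ) (C D : Fin m → ℝ)
    (hL : ∀ t, L t ≤ pr P {ω | ∀ s, s ≠ t → Yp (j s) ω = i s})
    (hU : ∀ t, pr P {ω | ∀ s, s ≠ t → Yp (j s) ω = i s} ≤ U t)
    (hG : ∀ t, G t ≤ pr P {ω | Yp (j t) ω = i t ∧ Y ω = q})
    (hH : ∀ t, pr P {ω | Yp (j t) ω = i t ∧ Y ω = q} ≤ H t)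
    (hA : ∀ r, i r = q →
      A r ≤ pr P {ω | (∀ s, s ≠ r → Yp (j s) ω = i s) ∧ X ω = j r ∧ Y ω = q})
    (hB : ∀ r, i r = q →
      pr P {ω | (∀ s, s ≠ r → Yp (j s) ω = i s) ∧ X ω = j r ∧ Y ω = q} ≤ B r)
    (hC : ∀ p, p ∉ Set.range j →
      C p ≤ pr P {ω | (∀ t, Yp (j t) ω = i t) ∧ X ω = p ∧ Y ω = q})
    (hD : ∀ p, p ∉ Set.range j →
      pr P {ω | (∀ t, Yp (j t) ω = i t) ∧ X ω = p ∧ Y ω = q} ≤ D p) :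
    max (max 0 ((∑ t, pr P {ω | Yp (j t) ω = i t}) + pr P {ω | Y ω = q} - (k : ℝ)))
        (max (⨆ t, (L t + G t - 1))
             ((∑ r ∈ Finset.univ.filter (fun r => i r = q), A r)
               + ∑ p ∈ Finset.univ.filter (fun p => ∀ t, j t ≠ p), C p))
      ≤ pr P {ω | (∀ t, Yp (j t) ω = i t) ∧ Y ω = q} ∧
    pr P {ω | (∀ t, Yp (j t) ω = i t) ∧ Y ω = q}
      ≤ min (min (⨅ t, pr P {ω | Yp (j t) ω = i t}) (pr P {ω | Y ω = q}))
            (min (min (⨅ t, U t) (⨅ t, H t))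
                 ((∑ r ∈ Finset.univ.filter (fun r => i r = q), B r)
                   + ∑ p ∈ Finset.univ.filter (fun p => ∀ t, j t ≠ p), D p)) := by
  have : Nonempty (Fin k) := ⟨⟨0, hk⟩⟩
  simpa only [pr, ← measureReal_def, Fintype.card_fin] using
    bounds_multi_yq_general (P := P) hX hY hYp hconsist hj hL hU hG hH hA hB hC hD
end

section
/- For every j : Fin m and i : Fin n, the experimental (causal-effect) probability and the observational probabilities satisfy the general relation P(X = j ∧ Y = i) ≤ P(Yp j = i) ≤ P(X = j ∧ Y = i) + 1 − P(X = j). -/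
open MeasureTheory

/- Consistency makes the observed event `X = t, Y ∈ B` coincide with `X = t, Yp t ∈ B`; the two
bounds are then the Fréchet bounds `μ s + μ u - 1 ≤ μ (s ∩ u) ≤ μ u`. -/

section GeneralRelation

variable {Ω : Type*} [MeasurableSpace Ω]

theorem measureReal_add_le_inter_add_univ {μ : Measure Ω} [IsFiniteMeasure μ] {s : Set Ω}
    (hs : NullMeasurableSet s μ) (u : Set Ω) :
    μ.real s + μ.real u ≤ μ.real (s ∩ u) + μ.real Set.univ :=
  calc μ.real s + μ.real u = μ.real (s ∩ u) + μ.real (s ∪ u) := by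
        rw [add_comm (μ.real (s ∩ u)), measureReal_union_add_inter₀' hs]
    _ ≤ μ.real (s ∩ u) + μ.real Set.univ := by
        gcongr
        · finiteness
        · exact Set.subset_univ _

variable {𝒯 𝒴 : Type*} {P : Measure Ω} {X : Ω → 𝒯} {Y : Ω → 𝒴} {Yp : 𝒯 → Ω → 𝒴}

theorem observed_event_ae_eq_potential_event (hconsist : ∀ᵐ ω ∂P, Y ω = Yp (X ω) ω)
    (t : 𝒯) (B : Set 𝒴) :
    {ω | X ω = t ∧ Y ω ∈ B} =ᵐ[P] ({ω | X ω = t} ∩ {ω | Yp t ω ∈ B} : Set Ω) := by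
  rw [Filter.eventuallyEq_set]
  filter_upwards [hconsist] with ω hω
  refine and_congr_right fun (hX : X ω = t) => ?_
  rw [hω, hX, Set.mem_ofPred_eq]

theorem general_relation_general [IsProbabilityMeasure P] {t : 𝒯}
    (hXt : NullMeasurableSet {ω | X ω = t} P) (hconsist : ∀ᵐ ω ∂P, Y ω = Yp (X ω) ω)
    (B : Set 𝒴) :
    pr P {ω | X ω = t ∧ Y ω ∈ B} ≤ pr P {ω | Yp t ω ∈ B} ∧
    pr P {ω | Yp t ω ∈ B} ≤ pr P {ω | X ω = t ∧ Y ω ∈ B} + 1 - pr P {ω | X ω = t} := by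
  simp only [pr, ← measureReal_def]
  rw [measureReal_congr (observed_event_ae_eq_potential_event hconsist t B)]
  refine ⟨measureReal_mono Set.inter_subset_right, ?_⟩
  have frechet := measureReal_add_le_inter_add_univ hXt {ω | Yp t ω ∈ B}
  rw [probReal_univ] at frechet
  linarith

end GeneralRelation

/-- The general relation between experimental and observational data:
`P(x_j, y_i) ≤ P(y_i_{x_j}) ≤ P(x_j, y_i) + 1 − P(x_j)`. -/
theorem general_relation
    {Ω : Type*} [MeasurableSpace Ω] (P : Measure Ω) [IsProbabilityMeasure P]
    {m n : ℕ} (hm : 0 < m) (hn : 0 < n)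
    (X : Ω → Fin m) (Y : Ω → Fin n) (Yp : Fin m → Ω → Fin n)
    (hX : Measurable X) (hY : Measurable Y) (hYp : ∀ j, Measurable (Yp j))
    (hconsist : ∀ ω, Y ω = Yp (X ω) ω)
    (j : Fin m) (i : Fin n) :
    pr P {ω | X ω = j ∧ Y ω = i} ≤ pr P {ω | Yp j ω = i} ∧
    pr P {ω | Yp j ω = i} ≤ pr P {ω | X ω = j ∧ Y ω = i} + 1 - pr P {ω | X ω = j} :=
  general_relation_general (hX (measurableSet_singleton j)).nullMeasurableSet
    (ae_of_all P hconsist) {i}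
end
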